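/- Let Ω ⊆ ℝ³ be open and let α(x) = α₁(x₁)e₁ + α₂(x₂)e₂ + α₃(x₃)e₃, where α₁, α₂, α₃ : ℝ → ℂ are continuously differentiable. Define the scalar potentials v_k := −Dα^{(k)} − α² for k = 0,1,2,3; explicitly, with s := α₁² + α₂² + α₃², v₀ = α₁' + α₂' + α₃' + s, v₁ = α₁' − α₂' − α₃' + s, v₂ = −α₁' + α₂' − α₃' + s, v₃ = −α₁' − α₂' + α₃' + s. If g₀, g₁, g₂, g₃ : Ω → ℂ are twice differentiable scalar functions satisfying −Δg_k + v_k g_k = 0 on Ω, then the function f := (D − M^α)g = Dg − gα, where g = g₀ + g₁e₁ + g₂e₂ + g₃e₃, satisfies Df + fα = 0 on Ω. -/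

import Mathlib

noncomputable section

abbrev HC := Quaternion ℂ

def e1 : HC := ⟨0, 1, 0, 0⟩
def e2 : HC := ⟨0, 0, 1, 0⟩
def e3 : HC := ⟨0, 0, 0, 1⟩

def pd (k : Fin 3) (g : (Fin 3 → ℝ) → ℂ) (x : Fin 3 → ℝ) : ℂ :=
  fderiv ℝ g x (Pi.single k 1)

def lap (g : (Fin 3 → ℝ) → ℂ) (x : Fin 3 → ℝ) : ℂ :=
  pd 0 (pd 0 g) x + pd 1 (pd 1 g) x + pd 2 (pd 2 g) x

def pdq (k : Fin 3) (f : (Fin 3 → ℝ) → HC) (x : Fin 3 → ℝ) : HC :=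
  ⟨pd k (fun y => (f y).re) x, pd k (fun y => (f y).imI) x,
   pd k (fun y => (f y).imJ) x, pd k (fun y => (f y).imK) x⟩

def Dq (f : (Fin 3 → ℝ) → HC) (x : Fin 3 → ℝ) : HC :=
  e1 * pdq 0 f x + e2 * pdq 1 f x + e3 * pdq 2 f x

def lapq (f : (Fin 3 → ℝ) → HC) (x : Fin 3 → ℝ) : HC :=
  ⟨lap (fun y => (f y).re) x, lap (fun y => (f y).imI) x,
   lap (fun y => (f y).imJ) x, lap (fun y => (f y).imK) x⟩

def QDiffOn (f : (Fin 3 → ℝ) → HC) (Ω : Set (Fin 3 → ℝ)) : Prop :=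
  DifferentiableOn ℝ (fun y => (f y).re) Ω ∧ DifferentiableOn ℝ (fun y => (f y).imI) Ω ∧
  DifferentiableOn ℝ (fun y => (f y).imJ) Ω ∧ DifferentiableOn ℝ (fun y => (f y).imK) Ω

def QC2On (f : (Fin 3 → ℝ) → HC) (Ω : Set (Fin 3 → ℝ)) : Prop :=
  ContDiffOn ℝ 2 (fun y => (f y).re) Ω ∧ ContDiffOn ℝ 2 (fun y => (f y).imI) Ω ∧
  ContDiffOn ℝ 2 (fun y => (f y).imJ) Ω ∧ ContDiffOn ℝ 2 (fun y => (f y).imK) Ω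


/-- Build a biquaternion from its four complex components. -/
def quat (a b c d : ℂ) : HC := ⟨a, b, c, d⟩

/-- The diagonal purely vectorial function `α(x) = α₁(x₁)e₁ + α₂(x₂)e₂ + α₃(x₃)e₃`. -/
def dal (a1 a2 a3 : ℝ → ℂ) (x : Fin 3 → ℝ) : HC :=
  quat 0 (a1 (x 0)) (a2 (x 1)) (a3 (x 2))

/-- `s = α₁² + α₂² + α₃²` (so that `α² = −s`). -/
def sq3 (a1 a2 a3 : ℝ → ℂ) (x : Fin 3 → ℝ) : ℂ :=
  a1 (x 0) ^ 2 + a2 (x 1) ^ 2 + a3 (x 2) ^ 2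

/-- The scalar potentials `v_k = −Dα^{(k)} − α²`, written explicitly. -/
def vpot (a1 a2 a3 : ℝ → ℂ) : Fin 4 → (Fin 3 → ℝ) → ℂ :=
  ![fun x => deriv a1 (x 0) + deriv a2 (x 1) + deriv a3 (x 2) + sq3 a1 a2 a3 x,
    fun x => deriv a1 (x 0) - deriv a2 (x 1) - deriv a3 (x 2) + sq3 a1 a2 a3 x,
    fun x => -deriv a1 (x 0) + deriv a2 (x 1) - deriv a3 (x 2) + sq3 a1 a2 a3 x,
    fun x => -deriv a1 (x 0) - deriv a2 (x 1) + deriv a3 (x 2) + sq3 a1 a2 a3 x]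

/-- The scalar potentials `w_k = Dα^{(k)} − α²`, written explicitly. -/
def wpot (a1 a2 a3 : ℝ → ℂ) : Fin 4 → (Fin 3 → ℝ) → ℂ :=
  ![fun x => -(deriv a1 (x 0) + deriv a2 (x 1) + deriv a3 (x 2)) + sq3 a1 a2 a3 x,
    fun x => -deriv a1 (x 0) + deriv a2 (x 1) + deriv a3 (x 2) + sq3 a1 a2 a3 x,
    fun x => deriv a1 (x 0) - deriv a2 (x 1) + deriv a3 (x 2) + sq3 a1 a2 a3 x,
    fun x => deriv a1 (x 0) + deriv a2 (x 1) - deriv a3 (x 2) + sq3 a1 a2 a3 x]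

/-- The `k`-th complex component of a biquaternion. -/
def qc (k : Fin 4) (q : HC) : ℂ := ![q.re, q.imI, q.imJ, q.imK] k

/-!
For any differentiable `α`, the Leibniz rule `D(gα) = (Dg)α + ∑ⱼ eⱼ g ∂ⱼα` and `D² = -Δ` give
`(D + M^α)(D - M^α)g = -Δg - ∑ⱼ eⱼ g ∂ⱼα - gα²`: the two first-order terms `(Dg)α` cancel.
When `αⱼ` depends on `xⱼ` alone, `∂ⱼα = αⱼ' eⱼ`, and `q ↦ eⱼ q eⱼ` acts on each component of `q` as
a sign. So the right-hand side is diagonal, with components `-Δg_k + v_k g_k`.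
-/

open Topology
open scoped Quaternion

section TwiceDifferentiable

variable {E F : Type*} [NormedAddCommGroup E] [NormedSpace ℝ E]
  [NormedAddCommGroup F] [NormedSpace ℝ F]

/-- Pointwise second-order Fréchet differentiability over `ℝ`. Differentiability near `x` is part of
the definition, so that `fderiv ℝ u` is nowhere a junk value there. -/
structure TwiceDifferentiableAt (u : E → F) (x : E) : Prop where
  eventually_differentiableAt : ∀ᶠ y in 𝓝 x, DifferentiableAt ℝ u y
  differentiableAt_fderiv : DifferentiableAt ℝ (fderiv ℝ u) x

namespace TwiceDifferentiableAt

variable {u : E → F} {x : E}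

theorem of_contDiffAt (hu : ContDiffAt ℝ 2 u x) : TwiceDifferentiableAt u x where
  eventually_differentiableAt :=
    (hu.eventually (by simp)).mono fun _ hy => hy.differentiableAt two_ne_zero
  differentiableAt_fderiv :=
    (hu.fderiv_right (m := 1) (by norm_num)).differentiableAt one_ne_zero

theorem differentiableAt (hu : TwiceDifferentiableAt u x) : DifferentiableAt ℝ u x :=
  hu.eventually_differentiableAt.self_of_nhds

theorem fderiv_fderiv_comm (hu : TwiceDifferentiableAt u x) (v w : E) :
    fderiv ℝ (fderiv ℝ u) x v w = fderiv ℝ (fderiv ℝ u) x w v :=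
  second_derivative_symmetric_of_eventually
    (hu.eventually_differentiableAt.mono fun _ hy => hy.hasFDerivAt)
    hu.differentiableAt_fderiv.hasFDerivAt v w

end TwiceDifferentiableAt

end TwiceDifferentiable

section PartialDerivative

variable {u v : (Fin 3 → ℝ) → ℂ} {x : Fin 3 → ℝ} (j k : Fin 3)

theorem pd_add (hu : DifferentiableAt ℝ u x) (hv : DifferentiableAt ℝ v x) :
    pd k (fun y => u y + v y) x = pd k u x + pd k v x := by
  simp [pd, fderiv_fun_add hu hv]

theorem pd_sub (hu : DifferentiableAt ℝ u x) (hv : DifferentiableAt ℝ v x) :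
    pd k (fun y => u y - v y) x = pd k u x - pd k v x := by
  simp [pd, fderiv_fun_sub hu hv]

theorem pd_mul (hu : DifferentiableAt ℝ u x) (hv : DifferentiableAt ℝ v x) :
    pd k (fun y => u y * v y) x = pd k u x * v x + u x * pd k v x := by
  simp [pd, fderiv_fun_mul hu hv, mul_comm, add_comm]

theorem pd_const (c : ℂ) : pd k (fun _ => c) x = 0 := by
  simp [pd]

theorem pd_comp_apply {a : ℝ → ℂ} (ha : DifferentiableAt ℝ a (x j)) :
    pd k (fun y => a (y j)) x = if j = k then deriv a (x j) else 0 := by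
  have hcomp : HasFDerivAt (fun y : Fin 3 → ℝ => a (y j)) _ x :=
    ha.hasFDerivAt.comp x (hasFDerivAt_apply j x)
  rw [pd, hcomp.fderiv]
  split_ifs with hjk <;> simp [hjk]

theorem TwiceDifferentiableAt.differentiableAt_pd (hu : TwiceDifferentiableAt u x) :
    DifferentiableAt ℝ (pd k u) x :=
  hu.differentiableAt_fderiv.clm_apply (differentiableAt_const _)

theorem pd_pd_comm (hu : TwiceDifferentiableAt u x) : pd j (pd k u) x = pd k (pd j u) x := by
  have pd_pd (a b : Fin 3) :
      pd a (pd b u) x = fderiv ℝ (fderiv ℝ u) x (Pi.single a 1) (Pi.single b 1) := by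
    change fderiv ℝ (fun y => fderiv ℝ u y (Pi.single b 1)) x (Pi.single a 1) = _
    simp [fderiv_clm_apply hu.differentiableAt_fderiv (differentiableAt_const _)]
  rw [pd_pd, pd_pd, hu.fderiv_fderiv_comm]

end PartialDerivative

section Components

variable (a b c d : ℂ)

@[simp] theorem re_quat : (quat a b c d).re = a := rfl

@[simp] theorem imI_quat : (quat a b c d).imI = b := rfl

@[simp] theorem imJ_quat : (quat a b c d).imJ = c := rfl

@[simp] theorem imK_quat : (quat a b c d).imK = d := rfl

theorem e1_eq_quat : e1 = quat 0 1 0 0 := rfl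

theorem e2_eq_quat : e2 = quat 0 0 1 0 := rfl

theorem e3_eq_quat : e3 = quat 0 0 0 1 := rfl

theorem e1_mul_mul_quat (q : HC) :
    e1 * q * quat 0 c 0 0 = quat (-c * q.re) (-c * q.imI) (c * q.imJ) (c * q.imK) := by
  ext <;> simp [e1_eq_quat, mul_comm]

theorem e2_mul_mul_quat (q : HC) :
    e2 * q * quat 0 0 c 0 = quat (-c * q.re) (c * q.imI) (-c * q.imJ) (c * q.imK) := by
  ext <;> simp [e2_eq_quat, mul_comm]

theorem e3_mul_mul_quat (q : HC) :
    e3 * q * quat 0 0 0 c = quat (-c * q.re) (c * q.imI) (c * q.imJ) (-c * q.imK) := by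
  ext <;> simp [e3_eq_quat, mul_comm]

end Components

section Biquaternion

variable {f g α : (Fin 3 → ℝ) → HC} {x : Fin 3 → ℝ} (j k : Fin 3)

/-- Real differentiability of a biquaternion-valued function at a point. It is stated for the
components because Mathlib puts no norm on `Quaternion ℂ`. -/
structure QDifferentiableAt (f : (Fin 3 → ℝ) → HC) (x : Fin 3 → ℝ) : Prop where
  re : DifferentiableAt ℝ (fun y => (f y).re) x
  imI : DifferentiableAt ℝ (fun y => (f y).imI) x
  imJ : DifferentiableAt ℝ (fun y => (f y).imJ) x
  imK : DifferentiableAt ℝ (fun y => (f y).imK) x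

/-- Second-order real differentiability of a biquaternion-valued function at a point, stated for
the components like `QDifferentiableAt`. -/
structure QTwiceDifferentiableAt (f : (Fin 3 → ℝ) → HC) (x : Fin 3 → ℝ) : Prop where
  re : TwiceDifferentiableAt (fun y => (f y).re) x
  imI : TwiceDifferentiableAt (fun y => (f y).imI) x
  imJ : TwiceDifferentiableAt (fun y => (f y).imJ) x
  imK : TwiceDifferentiableAt (fun y => (f y).imK) x

namespace QDifferentiableAt

theorem const (q : HC) : QDifferentiableAt (fun _ => q) x where
  re := differentiableAt_const _
  imI := differentiableAt_const _
  imJ := differentiableAt_const _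
  imK := differentiableAt_const _

theorem add (hf : QDifferentiableAt f x) (hg : QDifferentiableAt g x) :
    QDifferentiableAt (fun y => f y + g y) x where
  re := hf.re.add hg.re
  imI := hf.imI.add hg.imI
  imJ := hf.imJ.add hg.imJ
  imK := hf.imK.add hg.imK

theorem mul (hf : QDifferentiableAt f x) (hg : QDifferentiableAt g x) :
    QDifferentiableAt (fun y => f y * g y) x := by
  obtain ⟨_, _, _, _⟩ := hf
  obtain ⟨_, _, _, _⟩ := hg
  constructor <;>
    simp only [Quaternion.re_mul, Quaternion.imI_mul, Quaternion.imJ_mul, Quaternion.imK_mul] <;>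
    fun_prop

theorem const_mul (q : HC) (hf : QDifferentiableAt f x) : QDifferentiableAt (fun y => q * f y) x :=
  (const q).mul hf

end QDifferentiableAt

namespace QTwiceDifferentiableAt

theorem qDifferentiableAt (hg : QTwiceDifferentiableAt g x) : QDifferentiableAt g x :=
  ⟨hg.re.differentiableAt, hg.imI.differentiableAt, hg.imJ.differentiableAt,
    hg.imK.differentiableAt⟩

theorem qDifferentiableAt_pdq (hg : QTwiceDifferentiableAt g x) : QDifferentiableAt (pdq k g) x :=
  ⟨hg.re.differentiableAt_pd k, hg.imI.differentiableAt_pd k, hg.imJ.differentiableAt_pd k,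
    hg.imK.differentiableAt_pd k⟩

theorem qDifferentiableAt_Dq (hg : QTwiceDifferentiableAt g x) : QDifferentiableAt (Dq g) x :=
  (((hg.qDifferentiableAt_pdq 0).const_mul e1).add
    ((hg.qDifferentiableAt_pdq 1).const_mul e2)).add
    ((hg.qDifferentiableAt_pdq 2).const_mul e3)

end QTwiceDifferentiableAt

theorem pdq_eq_quat (f : (Fin 3 → ℝ) → HC) (x : Fin 3 → ℝ) :
    pdq k f x = quat (pd k (fun y => (f y).re) x) (pd k (fun y => (f y).imI) x)
      (pd k (fun y => (f y).imJ) x) (pd k (fun y => (f y).imK) x) :=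
  rfl

theorem pdq_add (hf : QDifferentiableAt f x) (hg : QDifferentiableAt g x) :
    pdq k (fun y => f y + g y) x = pdq k f x + pdq k g x :=
  Quaternion.ext _ _ (pd_add k hf.re hg.re) (pd_add k hf.imI hg.imI) (pd_add k hf.imJ hg.imJ)
    (pd_add k hf.imK hg.imK)

theorem pdq_sub (hf : QDifferentiableAt f x) (hg : QDifferentiableAt g x) :
    pdq k (fun y => f y - g y) x = pdq k f x - pdq k g x :=
  Quaternion.ext _ _ (pd_sub k hf.re hg.re) (pd_sub k hf.imI hg.imI) (pd_sub k hf.imJ hg.imJ)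
    (pd_sub k hf.imK hg.imK)

theorem pdq_mul (hf : QDifferentiableAt f x) (hg : QDifferentiableAt g x) :
    pdq k (fun y => f y * g y) x = pdq k f x * g x + f x * pdq k g x := by
  obtain ⟨_, _, _, _⟩ := hf
  obtain ⟨_, _, _, _⟩ := hg
  ext <;>
    simp (disch := fun_prop) only [pdq_eq_quat, Quaternion.re_mul, Quaternion.imI_mul,
      Quaternion.imJ_mul, Quaternion.imK_mul, Quaternion.re_add, Quaternion.imI_add,
      Quaternion.imJ_add, Quaternion.imK_add, re_quat, imI_quat, imJ_quat, imK_quat, pd_add,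
      pd_sub, pd_mul] <;>
    ring

theorem pdq_const_mul (q : HC) (hg : QDifferentiableAt g x) :
    pdq k (fun y => q * g y) x = q * pdq k g x := by
  have pdq_const : pdq k (fun _ => q) x = 0 :=
    Quaternion.ext _ _ (pd_const k _) (pd_const k _) (pd_const k _) (pd_const k _)
  rw [pdq_mul k (.const q) hg, pdq_const, zero_mul, zero_add]

theorem pdq_pdq_comm (hg : QTwiceDifferentiableAt g x) :
    pdq j (pdq k g) x = pdq k (pdq j g) x :=
  Quaternion.ext _ _ (pd_pd_comm j k hg.re) (pd_pd_comm j k hg.imI) (pd_pd_comm j k hg.imJ)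
    (pd_pd_comm j k hg.imK)

theorem pdq_Dq (hg : QTwiceDifferentiableAt g x) :
    pdq k (Dq g) x =
      e1 * pdq k (pdq 0 g) x + e2 * pdq k (pdq 1 g) x + e3 * pdq k (pdq 2 g) x := by
  have h0 := hg.qDifferentiableAt_pdq 0
  have h1 := hg.qDifferentiableAt_pdq 1
  have h2 := hg.qDifferentiableAt_pdq 2
  change pdq k (fun y => e1 * pdq 0 g y + e2 * pdq 1 g y + e3 * pdq 2 g y) x = _
  rw [pdq_add k ((h0.const_mul e1).add (h1.const_mul e2)) (h2.const_mul e3),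
    pdq_add k (h0.const_mul e1) (h1.const_mul e2), pdq_const_mul k e1 h0, pdq_const_mul k e2 h1,
    pdq_const_mul k e3 h2]

theorem Dq_sub (hf : QDifferentiableAt f x) (hg : QDifferentiableAt g x) :
    Dq (fun y => f y - g y) x = Dq f x - Dq g x := by
  simp only [Dq, pdq_sub _ hf hg, mul_sub]
  abel

theorem Dq_mul (hf : QDifferentiableAt f x) (hg : QDifferentiableAt g x) :
    Dq (fun y => f y * g y) x =
      Dq f x * g x + (e1 * f x * pdq 0 g x + e2 * f x * pdq 1 g x + e3 * f x * pdq 2 g x) := by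
  simp only [Dq, pdq_mul _ hf hg]
  noncomm_ring

theorem Dq_Dq (hg : QTwiceDifferentiableAt g x) : Dq (Dq g) x = -lapq g x := by
  have e1_e1 (p : HC) : e1 * (e1 * p) = -p := by ext <;> simp [e1_eq_quat]
  have e2_e2 (p : HC) : e2 * (e2 * p) = -p := by ext <;> simp [e2_eq_quat]
  have e3_e3 (p : HC) : e3 * (e3 * p) = -p := by ext <;> simp [e3_eq_quat]
  have e2_e1 (p : HC) : e2 * (e1 * p) = -(e1 * (e2 * p)) := by
    ext <;> simp [e1_eq_quat, e2_eq_quat]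
  have e3_e1 (p : HC) : e3 * (e1 * p) = -(e1 * (e3 * p)) := by
    ext <;> simp [e1_eq_quat, e3_eq_quat]
  have e3_e2 (p : HC) : e3 * (e2 * p) = -(e2 * (e3 * p)) := by
    ext <;> simp [e2_eq_quat, e3_eq_quat]
  have lapq_eq : lapq g x = pdq 0 (pdq 0 g) x + pdq 1 (pdq 1 g) x + pdq 2 (pdq 2 g) x := rfl
  rw [Dq, pdq_Dq 0 hg, pdq_Dq 1 hg, pdq_Dq 2 hg, pdq_pdq_comm 1 0 hg, pdq_pdq_comm 2 0 hg,
    pdq_pdq_comm 2 1 hg, lapq_eq]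
  simp only [mul_add, e1_e1, e2_e2, e3_e3, e2_e1, e3_e1, e3_e2]
  abel

theorem Dq_add_mul_Dq_sub_mul (hg : QTwiceDifferentiableAt g x) (hα : QDifferentiableAt α x) :
    Dq (fun y => Dq g y - g y * α y) x + (Dq g x - g x * α x) * α x =
      -lapq g x - (e1 * g x * pdq 0 α x + e2 * g x * pdq 1 α x + e3 * g x * pdq 2 α x) -
        g x * (α x * α x) := by
  rw [Dq_sub hg.qDifferentiableAt_Dq (hg.qDifferentiableAt.mul hα), Dq_Dq hg,
    Dq_mul hg.qDifferentiableAt hα, sub_mul, mul_assoc (g x)]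
  abel

end Biquaternion

section Diagonal

variable {g : (Fin 3 → ℝ) → HC} {a1 a2 a3 : ℝ → ℂ} {x : Fin 3 → ℝ}

theorem qDifferentiableAt_dal (ha1 : DifferentiableAt ℝ a1 (x 0))
    (ha2 : DifferentiableAt ℝ a2 (x 1)) (ha3 : DifferentiableAt ℝ a3 (x 2)) :
    QDifferentiableAt (dal a1 a2 a3) x where
  re := differentiableAt_const _
  imI := DifferentiableAt.comp (g := a1) x ha1 (differentiableAt_apply 0 x)
  imJ := DifferentiableAt.comp (g := a2) x ha2 (differentiableAt_apply 1 x)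
  imK := DifferentiableAt.comp (g := a3) x ha3 (differentiableAt_apply 2 x)

theorem pdq_dal (k : Fin 3) (ha1 : DifferentiableAt ℝ a1 (x 0))
    (ha2 : DifferentiableAt ℝ a2 (x 1)) (ha3 : DifferentiableAt ℝ a3 (x 2)) :
    pdq k (dal a1 a2 a3) x =
      quat 0 (if 0 = k then deriv a1 (x 0) else 0) (if 1 = k then deriv a2 (x 1) else 0)
        (if 2 = k then deriv a3 (x 2) else 0) :=
  Quaternion.ext _ _ (pd_const k 0) (pd_comp_apply 0 k ha1) (pd_comp_apply 1 k ha2)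
    (pd_comp_apply 2 k ha3)

theorem dal_mul_self (a1 a2 a3 : ℝ → ℂ) (x : Fin 3 → ℝ) :
    dal a1 a2 a3 x * dal a1 a2 a3 x = quat (-sq3 a1 a2 a3 x) 0 0 0 := by
  ext <;> simp [dal, sq3] <;> ring

theorem Dq_add_mul_dal_Dq_sub_mul_dal (hg : QTwiceDifferentiableAt g x)
    (ha1 : DifferentiableAt ℝ a1 (x 0)) (ha2 : DifferentiableAt ℝ a2 (x 1))
    (ha3 : DifferentiableAt ℝ a3 (x 2)) :
    Dq (fun y => Dq g y - g y * dal a1 a2 a3 y) x +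
        (Dq g x - g x * dal a1 a2 a3 x) * dal a1 a2 a3 x =
      quat (-lap (fun y => (g y).re) x + vpot a1 a2 a3 0 x * (g x).re)
        (-lap (fun y => (g y).imI) x + vpot a1 a2 a3 1 x * (g x).imI)
        (-lap (fun y => (g y).imJ) x + vpot a1 a2 a3 2 x * (g x).imJ)
        (-lap (fun y => (g y).imK) x + vpot a1 a2 a3 3 x * (g x).imK) := by
  have pdq_zero : pdq 0 (dal a1 a2 a3) x = quat 0 (deriv a1 (x 0)) 0 0 := by
    simp [pdq_dal 0 ha1 ha2 ha3]
  have pdq_one : pdq 1 (dal a1 a2 a3) x = quat 0 0 (deriv a2 (x 1)) 0 := by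
    simp [pdq_dal 1 ha1 ha2 ha3]
  have pdq_two : pdq 2 (dal a1 a2 a3) x = quat 0 0 0 (deriv a3 (x 2)) := by
    simp [pdq_dal 2 ha1 ha2 ha3]
  rw [Dq_add_mul_Dq_sub_mul hg (qDifferentiableAt_dal ha1 ha2 ha3), pdq_zero, pdq_one, pdq_two,
    e1_mul_mul_quat, e2_mul_mul_quat, e3_mul_mul_quat, dal_mul_self]
  have lapq_eq : lapq g x = quat (lap (fun y => (g y).re) x) (lap (fun y => (g y).imI) x)
      (lap (fun y => (g y).imJ) x) (lap (fun y => (g y).imK) x) := rfl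
  ext <;> simp [lapq_eq, vpot] <;> ring

theorem solution_from_schroedinger_solutions_general (hg : QTwiceDifferentiableAt g x)
    (ha1 : DifferentiableAt ℝ a1 (x 0)) (ha2 : DifferentiableAt ℝ a2 (x 1))
    (ha3 : DifferentiableAt ℝ a3 (x 2))
    (heq0 : -lap (fun y => (g y).re) x + vpot a1 a2 a3 0 x * (g x).re = 0)
    (heq1 : -lap (fun y => (g y).imI) x + vpot a1 a2 a3 1 x * (g x).imI = 0)
    (heq2 : -lap (fun y => (g y).imJ) x + vpot a1 a2 a3 2 x * (g x).imJ = 0)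
    (heq3 : -lap (fun y => (g y).imK) x + vpot a1 a2 a3 3 x * (g x).imK = 0) :
    Dq (fun y => Dq g y - g y * dal a1 a2 a3 y) x +
      (Dq g x - g x * dal a1 a2 a3 x) * dal a1 a2 a3 x = 0 := by
  rw [Dq_add_mul_dal_Dq_sub_mul_dal hg ha1 ha2 ha3, heq0, heq1, heq2, heq3]
  rfl

end Diagonal

/-- Proposition 3 of the paper: if `g_k` solve the scalar Schrödinger
equations `−Δg_k + v_k g_k = 0`, then `f = (D − M^α)g` solves `Df + fα = 0`. -/
theorem solution_from_schroedinger_solutions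
    (Ω : Set (Fin 3 → ℝ)) (hΩ : IsOpen Ω)
    (a1 a2 a3 : ℝ → ℂ)
    (ha1 : ContDiff ℝ 1 a1) (ha2 : ContDiff ℝ 1 a2) (ha3 : ContDiff ℝ 1 a3)
    (g0 g1 g2 g3 : (Fin 3 → ℝ) → ℂ)
    (hg0 : ContDiffOn ℝ 2 g0 Ω) (hg1 : ContDiffOn ℝ 2 g1 Ω)
    (hg2 : ContDiffOn ℝ 2 g2 Ω) (hg3 : ContDiffOn ℝ 2 g3 Ω)
    (heq0 : ∀ x ∈ Ω, -lap g0 x + vpot a1 a2 a3 0 x * g0 x = 0)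
    (heq1 : ∀ x ∈ Ω, -lap g1 x + vpot a1 a2 a3 1 x * g1 x = 0)
    (heq2 : ∀ x ∈ Ω, -lap g2 x + vpot a1 a2 a3 2 x * g2 x = 0)
    (heq3 : ∀ x ∈ Ω, -lap g3 x + vpot a1 a2 a3 3 x * g3 x = 0) :
    (let g : (Fin 3 → ℝ) → HC := fun y => quat (g0 y) (g1 y) (g2 y) (g3 y)
     let f : (Fin 3 → ℝ) → HC := fun y => Dq g y - g y * dal a1 a2 a3 y
     ∀ x ∈ Ω, Dq f x + f x * dal a1 a2 a3 x = 0) := by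
  intro _ _ x hx
  have twice {u : (Fin 3 → ℝ) → ℂ} (hu : ContDiffOn ℝ 2 u Ω) : TwiceDifferentiableAt u x :=
    .of_contDiffAt (hu.contDiffAt (hΩ.mem_nhds hx))
  exact solution_from_schroedinger_solutions_general
    ⟨twice hg0, twice hg1, twice hg2, twice hg3⟩
    (ha1.differentiable_one _) (ha2.differentiable_one _) (ha3.differentiable_one _)
    (heq0 x hx) (heq1 x hx) (heq2 x hx) (heq3 x hx)
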